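/- arXiv:1906.00034 — 2 statements merged into one kernel-verified Lean document; each statement's English description precedes it below -/
import Mathlib

section
/- Let f : ℝⁿ → ℝ (n ≥ 2) be twice continuously differentiable with convex level set D = {x : f(x) ≤ f(x₀)}, convex and bounded below on D, and with ‖∇²f(x)‖ ≤ M on D. Let φ ∈ [0,1), let 0 < α < 1/2 and α < β < 1, and consider sequences generated by the Non-Secant Broyden-Class-type scheme: B̃₀ symmetric positive definite; d_k = −B̃_k^{-1} g_k where g_k = ∇f(x_k) and g_k ≠ 0 for all k; x_{k+1} = x_k + λ_k d_k with λ_k > 0 satisfying the Wolfe conditions f(x_k + λ_k d_k) ≤ f(x_k) + α λ_k g_kᵀ d_k and ∇f(x_k + λ_k d_k)ᵀ d_k ≥ β g_kᵀ d_k; s_k = x_{k+1} − x_k, y_k = g_{k+1} − g_k; B_{k+1} = Φ(B̃_k, s_k, y_k, φ), where each B̃_{k+1} is symmetric positive definite and satisfies tr(B̃_{k+1}) ≤ tr(B_{k+1}) and det(B̃_{k+1}) ≥ det(B_{k+1}). Then liminf_{k→∞} ‖g_k‖ = 0. -/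
/-!
Suppose `‖g_k‖ ≥ ε > 0` eventually, and follow the potential `Ψ_k = tr B̃_k - log det B̃_k`, which is
nonnegative because `log μ ≤ μ` for every eigenvalue `μ` (`log_det_le_trace`).

Put `p_k = -g_kᵀ s_k > 0` and `θ_k = ‖B̃_k s_k‖² / s_kᵀ B̃_k s_k = λ_k ‖g_k‖² / p_k`. The second Wolfe
condition gives `y_kᵀ s_k ≥ (1 - β) p_k`, and convexity with a bounded Hessian gives
`‖y_k‖² ≤ M y_kᵀ s_k` (`gradient_cocoercive`). Hence

* the trace changes by at most `-(1 - φ)/2 · θ_k + M + C λ_k` (`trace_scalar_bound`);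
* the determinant is multiplied by at least `y_kᵀ s_k / s_kᵀ B̃_k s_k ≥ (1 - β) / λ_k`
  (`det_broydenPhi_ge`).

The first Wolfe condition and the lower bound on `f` force `p_k → 0`, so
`λ_k / θ_k = p_k / ‖g_k‖² → 0`. Therefore `C λ_k` is absorbed by `θ_k`, and
`log λ_k = log θ_k + log (λ_k / θ_k)` is at most a small multiple of `θ_k` minus an arbitrarily large
constant. It follows that `Ψ_{k+1} ≤ Ψ_k - 1` eventually (`potential_step`), contradicting `Ψ ≥ 0`.
The conditions `tr B̃_{k+1} ≤ tr B_{k+1}` and `det B̃_{k+1} ≥ det B_{k+1}` say exactly that replacing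
`B_{k+1}` by `B̃_{k+1}` does not increase the potential.
-/

open Matrix
open scoped RealInnerProductSpace

/-- The Broyden-class update
`Φ(B̃, s, y, φ) = B̃ − (B̃ s sᵀ B̃)/(sᵀ B̃ s) + (y yᵀ)/(yᵀ s) + φ (sᵀ B̃ s) v vᵀ`,
where `v = y/(yᵀ s) − B̃ s/(sᵀ B̃ s)`. -/
noncomputable def broydenPhi {n : ℕ} (B : Matrix (Fin n) (Fin n) ℝ)
    (s y : Fin n → ℝ) (φ : ℝ) : Matrix (Fin n) (Fin n) ℝ :=
  B - (s ⬝ᵥ (B *ᵥ s))⁻¹ • Matrix.vecMulVec (B *ᵥ s) (s ᵥ* B)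
    + (y ⬝ᵥ s)⁻¹ • Matrix.vecMulVec y y
    + (φ * (s ⬝ᵥ (B *ᵥ s))) •
        Matrix.vecMulVec ((y ⬝ᵥ s)⁻¹ • y - (s ⬝ᵥ (B *ᵥ s))⁻¹ • (B *ᵥ s))
          ((y ⬝ᵥ s)⁻¹ • y - (s ⬝ᵥ (B *ᵥ s))⁻¹ • (B *ᵥ s))

/-- Second-order condition for convexity, at an interior point of a set on which `f` is convex. -/
lemma hessian_nonneg {E : Type*} [NormedAddCommGroup E] [NormedSpace ℝ E] {f : E → ℝ}
    (hf : ContDiff ℝ 2 f) {D : Set E} (hconv : ConvexOn ℝ D f) {z : E} (hz : D ∈ nhds z) (w : E) :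
    0 ≤ fderiv ℝ (fderiv ℝ f) z w w := by
  have hline : ∀ t : ℝ, HasDerivAt (fun t : ℝ => z + t • w) w t := fun t => by
    simpa using ((hasDerivAt_id t).smul_const w).const_add z
  have hf1 : Differentiable ℝ f := hf.differentiable (by norm_num)
  have hf2 : Differentiable ℝ (fderiv ℝ f) :=
    (hf.fderiv_right (m := 1) (by norm_num)).differentiable (by norm_num)
  have h1 : ∀ t : ℝ, HasDerivAt (fun t : ℝ => f (z + t • w)) (fderiv ℝ f (z + t • w) w) t :=
    fun t => (hf1 _).hasFDerivAt.comp_hasDerivAt t (hline t)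
  have h2 : HasDerivAt (fun t : ℝ => fderiv ℝ f (z + t • w) w)
      (fderiv ℝ (fderiv ℝ f) z w w) 0 := by
    have h := (hf2 (z + (0 : ℝ) • w)).hasFDerivAt.comp_hasDerivAt (0 : ℝ) (hline 0)
    simpa using h.clm_apply (hasDerivAt_const (0 : ℝ) w)
  have hc : ConvexOn ℝ ((fun t : ℝ => z + t • w) ⁻¹' D) (fun t : ℝ => f (z + t • w)) := by
    have h := hconv.comp_affineMap (AffineMap.lineMap z (z + w) : ℝ →ᵃ[ℝ] E)
    have he : (AffineMap.lineMap z (z + w) : ℝ → E) = fun t : ℝ => z + t • w := by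
      funext t
      simp [AffineMap.lineMap_apply, add_comm]
    simpa [he, Function.comp_def] using h
  have hS : (fun t : ℝ => z + t • w) ⁻¹' D ∈ nhds (0 : ℝ) :=
    (hline 0).continuousAt.preimage_mem_nhds (by simpa using hz)
  have hmono := hc.monotoneOn_deriv (fun t _ => (h1 t).differentiableAt)
  have hderiv : deriv (fun t : ℝ => f (z + t • w)) = fun t : ℝ => fderiv ℝ f (z + t • w) w :=
    funext fun t => (h1 t).deriv
  rw [hderiv] at hmono
  refine h2.hasDerivWithinAt.nonneg_of_monotoneOn ?_ hmono
  have := (PerfectSpace.univ_preperfect (α := ℝ)) 0 (Set.mem_univ _)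
  exact (this.nhds_inter hS).mono (by simp)

/-- Local co-coercivity of the gradient: a positive semidefinite Hessian bounded by `M` along a
segment gives `‖y‖² ≤ M yᵀs`. The Hessian is controlled only on the sublevel set, so the segment
is required to stay strictly inside it. -/
lemma gradient_cocoercive {E : Type*} [NormedAddCommGroup E] [InnerProductSpace ℝ E]
    [CompleteSpace E] {f : E → ℝ}
    (hf : ContDiff ℝ 2 f) {c M : ℝ} (hM0 : 0 < M)
    (hconv : ConvexOn ℝ {z | f z ≤ c} f)
    (hM : ∀ z, f z ≤ c → ‖fderiv ℝ (fderiv ℝ f) z‖ ≤ M)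
    {x s : E} (hseg : ∀ t ∈ Set.Ioo (0 : ℝ) 1, f (x + t • s) < c) :
    ‖gradient f (x + s) - gradient f x‖ ^ 2 ≤ M * ⟪gradient f (x + s) - gradient f x, s⟫ := by
  set y := gradient f (x + s) - gradient f x with hy
  have hline : ∀ t : ℝ, HasDerivAt (fun t : ℝ => x + t • s) s t := fun t => by
    simpa using ((hasDerivAt_id t).smul_const s).const_add x
  have hf2 : Differentiable ℝ (fderiv ℝ f) :=
    (hf.fderiv_right (m := 1) (by norm_num)).differentiable (by norm_num)
  have h2 : ∀ (v : E) (t : ℝ), HasDerivAt (fun t : ℝ => fderiv ℝ f (x + t • s) v)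
      (fderiv ℝ (fderiv ℝ f) (x + t • s) s v) t := fun v t => by
    have h := (hf2 (x + t • s)).hasFDerivAt.comp_hasDerivAt t (hline t)
    simpa using h.clm_apply (hasDerivAt_const t v)
  have hgr : ∀ z v : E, fderiv ℝ f z v = ⟪gradient f z, v⟫ := fun z v => by
    rw [← toDual_gradient, InnerProductSpace.toDual_apply_apply]
  -- `ψ' ≤ 0` is the nonnegativity of the Hessian form at `M s - y` together with the bound `M`.
  let ψ : ℝ → ℝ := fun t =>
    2 * fderiv ℝ f (x + t • s) y - M * fderiv ℝ f (x + t • s) s - t * ‖y‖ ^ 2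
  have hψ : ∀ t, HasDerivAt ψ (2 * fderiv ℝ (fderiv ℝ f) (x + t • s) s y
      - M * fderiv ℝ (fderiv ℝ f) (x + t • s) s s - ‖y‖ ^ 2) t := fun t => by
    have h := (((h2 y t).const_mul 2).sub ((h2 s t).const_mul M)).sub
      ((hasDerivAt_id t).mul_const (‖y‖ ^ 2))
    rw [one_mul] at h
    exact h
  have hanti : AntitoneOn ψ (Set.Icc 0 1) := by
    refine antitoneOn_of_deriv_nonpos (convex_Icc 0 1)
      (fun t _ => (hψ t).continuousAt.continuousWithinAt)
      (fun t _ => (hψ t).differentiableAt.differentiableWithinAt) ?_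
    intro t ht
    rw [interior_Icc] at ht
    rw [(hψ t).deriv]
    have hlt := hseg t ht
    have hnb : {z | f z ≤ c} ∈ nhds (x + t • s) :=
      Filter.mem_of_superset ((isOpen_lt hf.continuous continuous_const).mem_nhds hlt)
        (fun z (hz : f z < c) => hz.le)
    set H := fderiv ℝ (fderiv ℝ f) (x + t • s) with hH
    have hpos : 0 ≤ H (M • s - y) (M • s - y) := hessian_nonneg hf hconv hnb _
    have hsymm : H y s = H s y := by
      have h := (hf.contDiffAt (x := x + t • s)).isSymmSndFDerivAt (by simp)
      exact h.eq y s
    have hbound : H y y ≤ M * ‖y‖ ^ 2 := by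
      calc H y y ≤ ‖H y y‖ := le_abs_self _
        _ ≤ ‖H‖ * ‖y‖ * ‖y‖ := H.le_opNorm₂ y y
        _ ≤ M * ‖y‖ * ‖y‖ := by gcongr; exact hM _ hlt.le
        _ = M * ‖y‖ ^ 2 := by ring
    have hexp : H (M • s - y) (M • s - y) = M * (M * H s s - 2 * H s y) + H y y := by
      simp [hsymm]
      ring
    rw [hexp] at hpos
    by_contra hcon
    push Not at hcon
    nlinarith [mul_pos hM0 hcon]
  have h01 := hanti (Set.left_mem_Icc.2 zero_le_one) (Set.right_mem_Icc.2 zero_le_one) zero_le_one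
  simp only [ψ, hgr, one_smul, zero_smul, add_zero, one_mul, zero_mul, sub_zero] at h01
  have e1 : ⟪gradient f (x + s), y⟫ - ⟪gradient f x, y⟫ = ‖y‖ ^ 2 := by
    rw [← inner_sub_left, ← hy, real_inner_self_eq_norm_sq]
  have e2 : ⟪gradient f (x + s), s⟫ - ⟪gradient f x, s⟫ = ⟪y, s⟫ := by
    rw [← inner_sub_left, ← hy]
  rw [← e2]
  linarith

lemma log_det_le_trace {n : ℕ} {A : Matrix (Fin n) (Fin n) ℝ} (hA : A.PosDef) :
    Real.log A.det ≤ A.trace := by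
  have h1 := hA.isHermitian.det_eq_prod_eigenvalues
  have h2 := hA.isHermitian.trace_eq_sum_eigenvalues
  simp only [RCLike.ofReal_real_eq_id, id] at h1 h2
  rw [h1, h2, Real.log_prod (fun i _ => (hA.eigenvalues_pos i).ne')]
  exact Finset.sum_le_sum fun i _ => by
    linarith [Real.log_le_sub_one_of_pos (hA.eigenvalues_pos i)]

lemma trace_broydenPhi {n : ℕ} {A : Matrix (Fin n) (Fin n) ℝ} (hA : A.PosDef)
    (s y : Fin n → ℝ) (φ : ℝ) :
    (broydenPhi A s y φ).trace = A.trace - (s ⬝ᵥ A *ᵥ s)⁻¹ * (A *ᵥ s ⬝ᵥ A *ᵥ s)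
      + (y ⬝ᵥ s)⁻¹ * (y ⬝ᵥ y)
      + φ * (s ⬝ᵥ A *ᵥ s) * ((y ⬝ᵥ s)⁻¹ ^ 2 * (y ⬝ᵥ y)
        - 2 * ((y ⬝ᵥ s)⁻¹ * (s ⬝ᵥ A *ᵥ s)⁻¹ * (y ⬝ᵥ A *ᵥ s))
        + (s ⬝ᵥ A *ᵥ s)⁻¹ ^ 2 * (A *ᵥ s ⬝ᵥ A *ᵥ s)) := by
  have hT : Aᵀ = A := by simpa using hA.isHermitian.eq
  have hv : s ᵥ* A = A *ᵥ s := by rw [← mulVec_transpose, hT]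
  simp only [broydenPhi, hv, trace_add, trace_sub, trace_smul, trace_vecMulVec, smul_eq_mul,
    sub_dotProduct, dotProduct_sub, smul_dotProduct, dotProduct_smul]
  rw [dotProduct_comm (A *ᵥ s) y]
  ring

/-- The update is a rank-two perturbation `A + U V` spanned by `a = y / yᵀs` and
`b = A s / sᵀAs`. The matrix determinant lemma gives the factor
`(yᵀs / sᵀAs) (1 + φ (sᵀAs · aᵀA⁻¹a - 1))`, and the last bracket is at least `1` because
`(a - b)ᵀA⁻¹(a - b) ≥ 0`. -/
lemma det_broydenPhi_ge {n : ℕ} {A : Matrix (Fin n) (Fin n) ℝ} (hA : A.PosDef)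
    {s y : Fin n → ℝ} {φ : ℝ} (hφ : 0 ≤ φ) (hσ : 0 < s ⬝ᵥ A *ᵥ s) (hρ : 0 < y ⬝ᵥ s) :
    A.det * ((y ⬝ᵥ s) / (s ⬝ᵥ A *ᵥ s)) ≤ (broydenPhi A s y φ).det := by
  have hT : Aᵀ = A := by simpa using hA.isHermitian.eq
  have hv : s ᵥ* A = A *ᵥ s := by rw [← mulVec_transpose, hT]
  have hTi : (A⁻¹)ᵀ = A⁻¹ := by rw [transpose_nonsing_inv, hT]
  have hu : IsUnit A.det := hA.det_pos.ne'.isUnit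
  set σ := s ⬝ᵥ A *ᵥ s with hσd
  set ρ := y ⬝ᵥ s with hρd
  set a : Fin n → ℝ := ρ⁻¹ • y with ha
  set b : Fin n → ℝ := σ⁻¹ • (A *ᵥ s) with hb
  let U : Matrix (Fin n) (Fin 2) ℝ := (Matrix.of ![a, b])ᵀ
  let V : Matrix (Fin 2) (Fin n) ℝ :=
    Matrix.of ![(ρ + φ * σ) • a - (φ * σ) • b, (-(φ * σ)) • a + (φ * σ - σ) • b]
  have hPhi : broydenPhi A s y φ = A + U * V := by
    ext i j
    simp only [broydenPhi, ← hσd, ← hρd, ← ha, ← hb, hv, U, V]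
    have hAs : A *ᵥ s = σ • b := by rw [hb, smul_inv_smul₀ hσ.ne']
    have hys : y = ρ • a := by rw [ha, smul_inv_smul₀ hρ.ne']
    rw [hAs]
    nth_rewrite 2 [hys]
    nth_rewrite 1 [hys]
    simp [Matrix.mul_apply, Fin.sum_univ_two, vecMulVec_apply]
    field_simp
    ring
  have hib : A⁻¹ *ᵥ b = σ⁻¹ • s := by
    rw [hb, mulVec_smul, mulVec_mulVec, nonsing_inv_mul _ hu, one_mulVec]
  have hab : a ⬝ᵥ A⁻¹ *ᵥ b = σ⁻¹ := by
    rw [hib, ha, smul_dotProduct, dotProduct_smul, ← hρd]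
    simp only [smul_eq_mul]; field_simp
  have hba : b ⬝ᵥ A⁻¹ *ᵥ a = σ⁻¹ := by
    rw [dotProduct_mulVec, ← mulVec_transpose, hTi, dotProduct_comm, hab]
  have hbb : b ⬝ᵥ A⁻¹ *ᵥ b = σ⁻¹ := by
    rw [hib, hb, smul_dotProduct, dotProduct_smul, dotProduct_comm, ← hσd]
    simp only [smul_eq_mul]; field_simp
  have ht : σ⁻¹ ≤ a ⬝ᵥ A⁻¹ *ᵥ a := by
    have h := hA.inv.posSemidef.dotProduct_mulVec_nonneg (a - b)
    simp only [star_trivial, mulVec_sub, dotProduct_sub, sub_dotProduct, hab, hba, hbb] at h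
    linarith
  set t := a ⬝ᵥ A⁻¹ *ᵥ a with htd
  have hent : ∀ i j, (V * A⁻¹ * U) i j = V i ⬝ᵥ A⁻¹ *ᵥ (![a, b] j) := fun i j => by
    rw [Matrix.mul_assoc]; rfl
  have hdet2 : (1 + V * A⁻¹ * U).det = ρ / σ * (1 + φ * (σ * t - 1)) := by
    rw [det_fin_two]
    have hV0 : V 0 = (ρ + φ * σ) • a - (φ * σ) • b := rfl
    have hV1 : V 1 = (-(φ * σ)) • a + (φ * σ - σ) • b := rfl
    simp only [Matrix.add_apply, hent, hV0, hV1]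
    simp [sub_dotProduct, add_dotProduct, smul_dotProduct, hab, hba, hbb, ← htd]
    field_simp
    ring
  rw [hPhi, det_add_mul U V hu, hdet2]
  have h1 : 1 ≤ σ * t := by
    calc 1 = σ * σ⁻¹ := by field_simp
      _ ≤ σ * t := by gcongr
  have h2 : 1 ≤ 1 + φ * (σ * t - 1) := by nlinarith
  gcongr
  · exact hA.det_pos.le
  · exact le_mul_of_one_le_right (by positivity) h2

/-- Bound on the change of trace, written in scalars: `p = -gᵀs`, `ρ = yᵀs`, `G = ‖g‖²`,
`Y = ‖y‖²`, `u = yᵀg`, so that `sᵀAs = lam * p` and `θ = lam * G / p` is `‖As‖² / sᵀAs`. The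
hypothesis `hu` is the Cauchy–Schwarz inequality between `y` and `g` in weighted form. -/
lemma trace_scalar_bound {lam p ρ G Y u M β φ : ℝ} (hlam : 0 < lam) (hp : 0 < p) (hM : 0 < M)
    (hφ0 : 0 ≤ φ) (hφ1 : φ < 1) (hβ : β < 1) (hY0 : 0 ≤ Y) (hG : 0 ≤ G)
    (hρ : (1 - β) * p ≤ ρ) (hY : Y ≤ M * ρ)
    (hu : ∀ a : ℝ, 2 * a * u ≤ a ^ 2 * G + Y) :
    -((lam * p)⁻¹ * (lam ^ 2 * G)) + ρ⁻¹ * Y + φ * (lam * p) * (ρ⁻¹ ^ 2 * Y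
        - 2 * (ρ⁻¹ * (lam * p)⁻¹ * (-(lam * u))) + (lam * p)⁻¹ ^ 2 * (lam ^ 2 * G))
      ≤ -((1 - φ) / 2 * (lam * G / p)) + M + M / (1 - β) * (1 + 2 / (1 - φ)) * lam := by
  have hβ' : 0 < 1 - β := by linarith
  have hφ' : 0 < 1 - φ := by linarith
  have hρ0 : 0 < ρ := lt_of_lt_of_le (by positivity) hρ
  have b1 : Y / ρ ≤ M := by rwa [div_le_iff₀ hρ0]
  have b1' : 0 ≤ Y / ρ := by positivity
  have bp : p / ρ ≤ 1 / (1 - β) := by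
    rw [div_le_div_iff₀ hρ0 hβ']; linarith
  have bpY : (p / ρ) * (Y / ρ) ≤ 1 / (1 - β) * M := by gcongr
  have b2 : φ * (lam * ((p / ρ) * (Y / ρ))) ≤ lam * (1 / (1 - β) * M) := by
    calc φ * (lam * ((p / ρ) * (Y / ρ))) ≤ 1 * (lam * ((p / ρ) * (Y / ρ))) := by gcongr
      _ ≤ lam * (1 / (1 - β) * M) := by rw [one_mul]; gcongr
  -- the weight balancing the cross term against half of the decrease `(1 - φ) θ`
  set η := (1 - φ) / 2 with hη
  have hη0 : 0 < η := by positivity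
  have b3 : 2 * (lam * u / ρ) ≤ η * (lam * G / p) + lam * ((p / ρ) * (Y / ρ)) / η := by
    have h := hu (η * ρ / p)
    have h' := mul_le_mul_of_nonneg_left h (show 0 ≤ lam * p / (η * ρ ^ 2) by positivity)
    have e1 : lam * p / (η * ρ ^ 2) * (2 * (η * ρ / p) * u) = 2 * (lam * u / ρ) := by
      field_simp
    have e2 : lam * p / (η * ρ ^ 2) * ((η * ρ / p) ^ 2 * G + Y)
        = η * (lam * G / p) + lam * ((p / ρ) * (Y / ρ)) / η := by
      field_simp
    rwa [e1, e2] at h'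
  have b4 : φ * (2 * (lam * u / ρ)) ≤ η * (lam * G / p) + lam * (1 / (1 - β) * M) / η := by
    calc φ * (2 * (lam * u / ρ))
        ≤ φ * (η * (lam * G / p) + lam * ((p / ρ) * (Y / ρ)) / η) := by gcongr
      _ ≤ 1 * (η * (lam * G / p) + lam * ((p / ρ) * (Y / ρ)) / η) := by gcongr
      _ ≤ η * (lam * G / p) + lam * (1 / (1 - β) * M) / η := by rw [one_mul]; gcongr
  have eL : -((lam * p)⁻¹ * (lam ^ 2 * G)) + ρ⁻¹ * Y + φ * (lam * p) * (ρ⁻¹ ^ 2 * Y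
        - 2 * (ρ⁻¹ * (lam * p)⁻¹ * (-(lam * u))) + (lam * p)⁻¹ ^ 2 * (lam ^ 2 * G))
      = -((1 - φ) * (lam * G / p)) + Y / ρ + φ * (lam * ((p / ρ) * (Y / ρ)))
        + φ * (2 * (lam * u / ρ)) := by
    field_simp
    ring
  have eR : M / (1 - β) * (1 + 2 / (1 - φ)) * lam
      = lam * (1 / (1 - β) * M) + lam * (1 / (1 - β) * M) / η := by
    rw [hη]; field_simp
  have eη : (1 - φ) * (lam * G / p) = η * (lam * G / p) + η * (lam * G / p) := by rw [hη]; ring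
  rw [eL, eR, eη]
  linarith

/-- If `-gᵀs ≤ δ ‖g‖²` with `δ` small in terms of `M`, `β`, `φ` only, then one Broyden step lowers
the potential `tr - log det` by at least `1`. -/
lemma potential_step {n : ℕ} {A : Matrix (Fin n) (Fin n) ℝ} (hA : A.PosDef)
    {s y g : Fin n → ℝ} {lam M β φ δ : ℝ} (hg : g ≠ 0) (hlam : 0 < lam) (hM : 0 < M)
    (hφ0 : 0 ≤ φ) (hφ1 : φ < 1) (hβ : β < 1)
    (hAs : A *ᵥ s = -(lam • g)) (hρ : (1 - β) * (-(g ⬝ᵥ s)) ≤ y ⬝ᵥ s)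
    (hY : y ⬝ᵥ y ≤ M * (y ⬝ᵥ s)) (hδ : -(g ⬝ᵥ s) ≤ δ * (g ⬝ᵥ g))
    (hδ1 : M / (1 - β) * (1 + 2 / (1 - φ)) * δ ≤ (1 - φ) / 4)
    (hδ2 : δ ≤ (1 - β) * ((1 - φ) / 4) * Real.exp (-M)) :
    0 < (broydenPhi A s y φ).det ∧
    (broydenPhi A s y φ).trace - Real.log (broydenPhi A s y φ).det
      ≤ A.trace - Real.log A.det - 1 := by
  have hβ' : 0 < 1 - β := by linarith
  have hφ' : 0 < 1 - φ := by linarith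
  have hs : s ≠ 0 := by
    rintro rfl
    rw [mulVec_zero] at hAs
    exact hg ((smul_eq_zero.1 (neg_eq_zero.1 hAs.symm)).resolve_left hlam.ne')
  set p := -(g ⬝ᵥ s) with hpd
  have hσe : s ⬝ᵥ A *ᵥ s = lam * p := by
    rw [hAs, dotProduct_neg, dotProduct_smul, dotProduct_comm, hpd, smul_eq_mul]; ring
  have hσ : 0 < s ⬝ᵥ A *ᵥ s := by simpa using hA.dotProduct_mulVec_pos hs
  have hp : 0 < p := by
    rw [hσe] at hσ
    exact pos_of_mul_pos_right hσ hlam.le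
  have hρ0 : 0 < y ⬝ᵥ s := lt_of_lt_of_le (by positivity) hρ
  have hG : 0 < g ⬝ᵥ g := by
    have := dotProduct_star_self_pos_iff.2 hg
    simpa using this
  have hδ0 : 0 < δ := pos_of_mul_pos_left (hp.trans_le hδ) hG.le
  have hdet := det_broydenPhi_ge hA hφ0 hσ hρ0
  have htr := trace_broydenPhi hA s y φ
  have hYs : 0 ≤ y ⬝ᵥ y := by simpa using dotProduct_star_self_nonneg y
  have hGG : A *ᵥ s ⬝ᵥ A *ᵥ s = lam ^ 2 * (g ⬝ᵥ g) := by
    rw [hAs]; simp; ring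
  have hu : y ⬝ᵥ A *ᵥ s = -(lam * (y ⬝ᵥ g)) := by
    rw [hAs]; simp
  have hcs : ∀ a : ℝ, 2 * a * (y ⬝ᵥ g) ≤ a ^ 2 * (g ⬝ᵥ g) + y ⬝ᵥ y := fun a => by
    have h : 0 ≤ (y - a • g) ⬝ᵥ (y - a • g) := by
      simpa using dotProduct_star_self_nonneg (y - a • g)
    simp only [sub_dotProduct, dotProduct_sub, smul_dotProduct, dotProduct_smul, smul_eq_mul,
      dotProduct_comm g y] at h
    linarith
  have hb := trace_scalar_bound (G := g ⬝ᵥ g) hlam hp hM hφ0 hφ1 hβ hYs hG.le hρ hY hcs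
  rw [hGG, hu, hσe] at htr
  rw [hσe] at hdet
  set θ := lam * (g ⬝ᵥ g) / p with hθ
  have hθ0 : 0 < θ := by positivity
  have hlθ : lam ≤ δ * θ := by
    rw [hθ, ← mul_div_assoc, le_div_iff₀ hp]
    nlinarith
  have hC : M / (1 - β) * (1 + 2 / (1 - φ)) * lam ≤ (1 - φ) / 4 * θ := by
    calc M / (1 - β) * (1 + 2 / (1 - φ)) * lam
        ≤ M / (1 - β) * (1 + 2 / (1 - φ)) * (δ * θ) := by gcongr
      _ = M / (1 - β) * (1 + 2 / (1 - φ)) * δ * θ := by ring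
      _ ≤ _ := by gcongr
  have hApos := hA.det_pos
  have hlow : A.det * ((1 - β) / lam) ≤ (broydenPhi A s y φ).det := by
    refine le_trans ?_ hdet
    gcongr A.det * ?_
    rw [div_le_div_iff₀ hlam (by positivity)]
    nlinarith
  have hpos : 0 < A.det * ((1 - β) / lam) := by positivity
  refine ⟨hpos.trans_le hlow, ?_⟩
  have hlog := Real.log_le_log hpos hlow
  rw [Real.log_mul hApos.ne' (by positivity), Real.log_div hβ'.ne' hlam.ne'] at hlog
  have hlogl : Real.log lam ≤ Real.log (1 - β) + (1 - φ) / 4 * θ - 1 - M := by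
    have h1 : lam ≤ (1 - β) * Real.exp (-M) * ((1 - φ) / 4 * θ) := by
      calc lam ≤ δ * θ := hlθ
        _ ≤ (1 - β) * ((1 - φ) / 4) * Real.exp (-M) * θ := by gcongr
        _ = _ := by ring
    have h2 := Real.log_le_log hlam h1
    rw [Real.log_mul (by positivity) (by positivity), Real.log_mul hβ'.ne' (by positivity),
      Real.log_exp] at h2
    have h3 := Real.log_le_sub_one_of_pos (show 0 < (1 - φ) / 4 * θ by positivity)
    linarith
  linarith

/-- convergence (`liminf ‖g_k‖ = 0`) of the Non-Secant
Broyden-Class-type scheme, under the trace and determinant conditions on `B̃_k`. -/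
theorem nonsecant_broyden_liminf {n : ℕ} (hn : 2 ≤ n)
    (f : EuclideanSpace ℝ (Fin n) → ℝ)
    (x d : ℕ → EuclideanSpace ℝ (Fin n)) (lam : ℕ → ℝ)
    (B Btil : ℕ → Matrix (Fin n) (Fin n) ℝ) (M α β φ : ℝ)
    (hφ0 : 0 ≤ φ) (hφ1 : φ < 1)
    (hα0 : 0 < α) (hα : α < 1 / 2) (hαβ : α < β) (hβ : β < 1)
    (hf : ContDiff ℝ 2 f)
    (hD : Convex ℝ {z | f z ≤ f (x 0)})
    (hconv : ConvexOn ℝ {z | f z ≤ f (x 0)} f)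
    (hbdd : BddBelow (f '' {z | f z ≤ f (x 0)}))
    (hM : ∀ z ∈ {z : EuclideanSpace ℝ (Fin n) | f z ≤ f (x 0)},
      ‖fderiv ℝ (fderiv ℝ f) z‖ ≤ M)
    (hBtil0 : (Btil 0).PosDef)
    (hg : ∀ k, gradient f (x k) ≠ 0)
    (hd : ∀ k, d k = -(Matrix.toEuclideanLin ((Btil k)⁻¹) (gradient f (x k))))
    (hlam : ∀ k, 0 < lam k)
    (hx : ∀ k, x (k + 1) = x k + lam k • d k)
    (hwolfe1 : ∀ k, f (x k + lam k • d k) ≤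
      f (x k) + α * lam k * ⟪gradient f (x k), d k⟫)
    (hwolfe2 : ∀ k, β * ⟪gradient f (x k), d k⟫ ≤
      ⟪gradient f (x k + lam k • d k), d k⟫)
    (hupdate : ∀ k, B (k + 1) = broydenPhi (Btil k) (x (k + 1) - x k)
      (gradient f (x (k + 1)) - gradient f (x k)) φ)
    (hBtilpd : ∀ k, (Btil (k + 1)).PosDef)
    (htr : ∀ k, (Btil (k + 1)).trace ≤ (B (k + 1)).trace)
    (hdet : ∀ k, (B (k + 1)).det ≤ (Btil (k + 1)).det) :
    Filter.liminf (fun k => ‖gradient f (x k)‖) Filter.atTop = 0 := by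
  by_contra hne
  have hge : 0 ≤ Filter.liminf (fun k => ‖gradient f (x k)‖) Filter.atTop := by
    -- `Real.sSup_nonneg'` also covers an unbounded set of lower bounds, where `sSup` is `0`.
    rw [Filter.liminf_eq]
    refine Real.sSup_nonneg' ⟨0, ?_, le_rfl⟩
    exact Filter.Eventually.of_forall fun k => norm_nonneg _
  have hpos := lt_of_le_of_ne hge (Ne.symm hne)
  obtain ⟨ε, hε0, hε⟩ := exists_between hpos
  have hev : ∀ᶠ k in Filter.atTop, ε < ‖gradient f (x k)‖ :=
    Filter.eventually_lt_of_lt_liminf hε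
      ⟨0, Filter.eventually_map.2 (Filter.Eventually.of_forall fun k => norm_nonneg _)⟩
  have hpd : ∀ k, (Btil k).PosDef := fun k => by
    cases k with
    | zero => exact hBtil0
    | succ k => exact hBtilpd k
  have hs : ∀ k, x (k + 1) - x k = lam k • d k := fun k => by rw [hx k, add_sub_cancel_left]
  have hAs : ∀ k, Btil k *ᵥ (x (k + 1) - x k).ofLp = -(lam k • (gradient f (x k)).ofLp) := by
    intro k
    rw [hs k, hd k]
    have hu : IsUnit (Btil k).det := (hpd k).det_pos.ne'.isUnit
    simp [mulVec_neg, mulVec_smul, mulVec_mulVec, mul_nonsing_inv _ hu]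
  have hinner : ∀ u v : EuclideanSpace ℝ (Fin n), ⟪u, v⟫ = u.ofLp ⬝ᵥ v.ofLp := fun u v => by
    rw [EuclideanSpace.inner_eq_star_dotProduct, star_trivial, dotProduct_comm]
  -- `p k = -gₖᵀ sₖ`, the quantity that the first Wolfe condition makes tend to zero
  set p : ℕ → ℝ := fun k => -⟪gradient f (x k), x (k + 1) - x k⟫ with hp
  have hpe : ∀ k, p k = -(lam k * ⟪gradient f (x k), d k⟫) := fun k => by
    simp only [hp, hs k, inner_smul_right]
  have hp0 : ∀ k, 0 < p k := by
    intro k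
    have hσ : 0 < (x (k + 1) - x k).ofLp ⬝ᵥ Btil k *ᵥ (x (k + 1) - x k).ofLp := by
      have hne : (x (k + 1) - x k).ofLp ≠ 0 := by
        intro h0
        have h := hAs k
        rw [h0, mulVec_zero] at h
        have h' := (smul_eq_zero.1 (neg_eq_zero.1 h.symm)).resolve_left (hlam k).ne'
        exact hg k (by ext i; simpa using congrFun h' i)
      simpa using (hpd k).dotProduct_mulVec_pos hne
    rw [hAs k, dotProduct_neg, dotProduct_smul, smul_eq_mul, dotProduct_comm, ← hinner] at hσ
    have : 0 < lam k * p k := by simp only [hp]; linarith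
    exact pos_of_mul_pos_right this (hlam k).le
  have hdec : ∀ k, f (x (k + 1)) ≤ f (x k) - α * p k := fun k => by
    have h := hwolfe1 k
    rw [← hx k] at h
    rw [hpe k]; linarith
  have hanti : StrictAnti (fun k => f (x k)) := strictAnti_nat_of_succ_lt fun k => by
    have := hdec k
    have := mul_pos hα0 (hp0 k)
    linarith
  have hmem : ∀ k, f (x k) ≤ f (x 0) := fun k => hanti.antitone (Nat.zero_le k)
  have hlim := tendsto_atTop_ciInf hanti.antitone
    (hbdd.mono (by rintro _ ⟨k, rfl⟩; exact ⟨x k, hmem k, rfl⟩))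
  have hptend : Filter.Tendsto p Filter.atTop (nhds 0) := by
    have h1 := (hlim.sub (hlim.comp (Filter.tendsto_add_atTop_nat 1))).const_mul α⁻¹
    rw [sub_self, mul_zero] at h1
    refine squeeze_zero (fun k => (hp0 k).le) (fun k => ?_) h1
    have := hdec k
    simp only [Function.comp]
    rw [← div_eq_inv_mul, le_div_iff₀ hα0]
    linarith
  -- a positive bound for the Hessian
  set M' := max M 1 with hM'
  have hM'0 : 0 < M' := lt_max_of_lt_right one_pos
  have hcoc : ∀ k, ‖gradient f (x (k + 1)) - gradient f (x k)‖ ^ 2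
      ≤ M' * ⟪gradient f (x (k + 1)) - gradient f (x k), x (k + 1) - x k⟫ := by
    intro k
    have h := gradient_cocoercive (x := x k) (s := x (k + 1) - x k) hf hM'0 hconv
      (fun z hz => (hM z hz).trans (le_max_left _ _)) ?_
    · simpa using h
    intro t ht
    have hc := hconv.2 (hmem k) (hmem (k + 1)) (by linarith [ht.2] : 0 ≤ 1 - t) ht.1.le (by ring)
    have he : (1 - t) • x k + t • x (k + 1) = x k + t • (x (k + 1) - x k) := by module
    rw [he, smul_eq_mul, smul_eq_mul] at hc
    have h1 : f (x (k + 1)) < f (x k) := hanti (Nat.lt_succ_self k)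
    have := hmem k
    nlinarith [ht.1]
  have hβ' : 0 < 1 - β := by linarith
  have hφ' : 0 < 1 - φ := by linarith
  have hCp : 0 < M' / (1 - β) * (1 + 2 / (1 - φ)) := by positivity
  set C := M' / (1 - β) * (1 + 2 / (1 - φ)) with hC
  set δ := min ((1 - φ) / 4 / C) ((1 - β) * ((1 - φ) / 4) * Real.exp (-M')) with hδ
  have hδ0 : 0 < δ := lt_min (by positivity) (by positivity)
  have hδ1 : C * δ ≤ (1 - φ) / 4 := by
    have h := min_le_left ((1 - φ) / 4 / C) ((1 - β) * ((1 - φ) / 4) * Real.exp (-M'))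
    rw [← hδ, le_div_iff₀ hCp] at h
    linarith
  let Ψ : ℕ → ℝ := fun k => (Btil k).trace - Real.log (Btil k).det
  have hΨ0 : ∀ k, 0 ≤ Ψ k := fun k => sub_nonneg.2 (log_det_le_trace (hpd k))
  have hstep : ∀ᶠ k in Filter.atTop, Ψ (k + 1) ≤ Ψ k - 1 := by
    filter_upwards [hev, hptend.eventually_lt_const (show 0 < δ * ε ^ 2 by positivity)]
      with k hk1 hk2
    have hG : ε ^ 2 ≤ (gradient f (x k)).ofLp ⬝ᵥ (gradient f (x k)).ofLp := by
      rw [← hinner, real_inner_self_eq_norm_sq]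
      gcongr
    have hw : (1 - β) * p k ≤ ⟪gradient f (x (k + 1)) - gradient f (x k), x (k + 1) - x k⟫ := by
      have h := mul_le_mul_of_nonneg_left (hwolfe2 k) (hlam k).le
      rw [← hx k] at h
      rw [inner_sub_left, hs k, inner_smul_right, inner_smul_right, hpe k]
      linarith
    have hc := hcoc k
    rw [← real_inner_self_eq_norm_sq] at hc
    simp only [hinner, hp] at hc hw hk2
    obtain ⟨h1, h2⟩ := potential_step (hpd k) (g := (gradient f (x k)).ofLp)
      (y := (gradient f (x (k + 1)) - gradient f (x k)).ofLp) (δ := δ)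
      (fun h0 => hg k (by ext i; simpa using congrFun h0 i)) (hlam k) hM'0 hφ0 hφ1 hβ (hAs k)
      hw hc (hk2.le.trans (by gcongr)) hδ1 (min_le_right _ _)
    simp only [WithLp.ofLp_sub] at h1 h2
    rw [← hupdate k] at h1 h2
    have h3 := Real.log_le_log h1 (hdet k)
    have h4 := htr k
    simp only [Ψ]
    linarith
  obtain ⟨N, hN⟩ := Filter.eventually_atTop.1 hstep
  have hiter : ∀ m : ℕ, Ψ (N + m) ≤ Ψ N - m := fun m => by
    induction m with
    | zero => simp
    | succ m ih =>
      have := hN (N + m) (Nat.le_add_right _ _)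
      push_cast
      rw [← add_assoc]
      linarith
  obtain ⟨m, hm⟩ := exists_nat_gt (Ψ N)
  linarith [hiter m, hΨ0 (N + m)]
end

section
/- Let A be an n×n real symmetric positive definite matrix, b ∈ ℝⁿ, and f(x) = ½ xᵀ A x − xᵀ b. Suppose the BFGS-type iteration with exact line search is run with symmetric positive definite matrices H̃_k satisfying H̃_k g_{k+1} = β_k H₀ g_{k+1} for some β_k ≠ 0 (where H₀ is symmetric positive definite, g_k = A x_k − b, s_k = x_{k+1} − x_k with x_{k+1} = x_k + λ_k d_k, λ_k the exact minimizer, d_{k+1} = −H_{k+1} g_{k+1} and H_{k+1} = (I − ρ_k s_k y_kᵀ) H̃_k (I − ρ_k y_k s_kᵀ) + ρ_k s_k s_kᵀ with y_k = g_{k+1} − g_k, ρ_k = 1/(s_kᵀ y_k)). Then the iteration terminates in at most n steps: there exists k ≤ n with g_k = 0. -/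
/-!
The iteration is a preconditioned conjugate gradient method with preconditioner `P = H 0`. Exact
line search makes `g (k+1)` orthogonal to `s k`, so the BFGS update applied to `g (k+1)` collapses
to `d (k+1) = -β (P g (k+1) - ρ (yᵀ P g (k+1)) s k)` (`bfgs_direction`). From this recurrence a
joint induction (`bfgs_conjugacy`) gives, as long as the gradients do not vanish, that `g k` is
orthogonal to the earlier steps and `P`-orthogonal to the earlier gradients, and that the steps are
`A`-conjugate. If `g 0, …, g n` were all nonzero, they would be `n + 1` pairwise `P`-orthogonal
nonzero vectors in an `n`-dimensional space.
-/

open Matrix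

/-- The quadratic objective `f(v) = ½ vᵀ A v − vᵀ b`. -/
noncomputable def fQuad {n : ℕ} (A : Matrix (Fin n) (Fin n) ℝ) (b : Fin n → ℝ)
    (v : Fin n → ℝ) : ℝ :=
  (1 / 2) * (v ⬝ᵥ (A *ᵥ v)) - v ⬝ᵥ b

lemma dotProduct_mulVec_symm {n : ℕ} {A : Matrix (Fin n) (Fin n) ℝ} (hA : A.PosDef)
    (v w : Fin n → ℝ) : v ⬝ᵥ (A *ᵥ w) = w ⬝ᵥ (A *ᵥ v) := by
  have h : Aᵀ = A := by simpa [conjTranspose_eq_transpose_of_trivial] using hA.isHermitian.eq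
  rw [dotProduct_mulVec, ← mulVec_transpose, h, dotProduct_comm]

lemma dotProduct_mulVec_self_pos {n : ℕ} {A : Matrix (Fin n) (Fin n) ℝ} (hA : A.PosDef)
    {v : Fin n → ℝ} (hv : v ≠ 0) : 0 < v ⬝ᵥ (A *ᵥ v) := by
  simpa using hA.dotProduct_mulVec_pos hv

/-- First-order optimality: at an exact line-search minimizer `z` along `d`, the gradient
`A z - b` is orthogonal to `d`. -/
lemma exact_line_search {n : ℕ} {A : Matrix (Fin n) (Fin n) ℝ} (hA : A.PosDef)
    (b z d : Fin n → ℝ) (h : ∀ t : ℝ, fQuad A b z ≤ fQuad A b (z + t • d)) :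
    d ⬝ᵥ (A *ᵥ z - b) = 0 := by
  have hq : 0 ≤ d ⬝ᵥ (A *ᵥ d) := by simpa using hA.posSemidef.dotProduct_mulVec_nonneg d
  have key : ∀ t : ℝ, 0 ≤ t * (d ⬝ᵥ (A *ᵥ z - b)) + t ^ 2 / 2 * (d ⬝ᵥ (A *ᵥ d)) := by
    intro t
    have := h t
    simp only [fQuad, mulVec_add, mulVec_smul, add_dotProduct, dotProduct_add, smul_dotProduct,
      dotProduct_smul, smul_eq_mul, dotProduct_mulVec_symm hA z d] at this
    rw [dotProduct_sub]
    linarith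
  generalize d ⬝ᵥ (A *ᵥ z - b) = p at key
  generalize d ⬝ᵥ (A *ᵥ d) = q at key hq
  have h1 := key (-p / (q + 1))
  have h2 : -p / (q + 1) * p + (-p / (q + 1)) ^ 2 / 2 * q
      = -(p ^ 2 * (q + 2)) / (2 * (q + 1) ^ 2) := by
    field_simp
    ring
  rw [h2, le_div_iff₀ (by positivity)] at h1
  have h3 : p ^ 2 = 0 := by nlinarith [sq_nonneg p]
  simpa using h3

/-- The BFGS-type update applied to a vector `v` orthogonal to `s`. -/
lemma bfgs_direction {n : ℕ} (P Ht : Matrix (Fin n) (Fin n) ℝ) (s y v : Fin n → ℝ) (ρ β : ℝ)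
    (hsv : s ⬝ᵥ v = 0) (hHt : Ht *ᵥ v = β • (P *ᵥ v)) :
    ((1 - ρ • vecMulVec s y) * Ht * (1 - ρ • vecMulVec y s) + ρ • vecMulVec s s) *ᵥ v
      = β • (P *ᵥ v - (ρ * (y ⬝ᵥ (P *ᵥ v))) • s) := by
  have h1 : (1 - ρ • vecMulVec y s) *ᵥ v = v := by
    simp [sub_mulVec, smul_mulVec, vecMulVec_mulVec, hsv]
  rw [add_mulVec, ← mulVec_mulVec, ← mulVec_mulVec, h1, hHt]
  simp only [sub_mulVec, one_mulVec, smul_mulVec, vecMulVec_mulVec, hsv, dotProduct_smul]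
  ext i
  simp
  ring

/-- The conjugate-gradient induction. The four conclusions are: the steplength is nonzero, the
gradient `g k` is orthogonal to the earlier steps, it is `P`-orthogonal to the earlier gradients,
and the step `s k` is `A`-conjugate to the earlier steps. -/
lemma bfgs_conjugacy {n : ℕ} {A P : Matrix (Fin n) (Fin n) ℝ} (hA : A.PosDef) (hP : P.PosDef)
    (g d s y : ℕ → Fin n → ℝ) (lam rho β : ℕ → ℝ)
    (hs : ∀ k, s k = lam k • d k) (hy : ∀ k, y k = A *ᵥ s k) (hgs : ∀ k, g (k + 1) = g k + y k)
    (hrho : ∀ k, rho k = (s k ⬝ᵥ y k)⁻¹) (hls : ∀ k, d k ⬝ᵥ g (k + 1) = 0)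
    (hβ : ∀ k, β k ≠ 0) (hd0 : d 0 = -(P *ᵥ g 0))
    (hd : ∀ k, d (k + 1) = -(β k • (P *ᵥ g (k + 1)
      - (rho k * (y k ⬝ᵥ (P *ᵥ g (k + 1)))) • s k)))
    (N : ℕ) (hne : ∀ k ≤ N, g k ≠ 0) :
    ∀ k ≤ N, lam k ≠ 0 ∧ (∀ j < k, s j ⬝ᵥ g k = 0) ∧ (∀ j < k, g j ⬝ᵥ (P *ᵥ g k) = 0) ∧
      (∀ j < k, y j ⬝ᵥ s k = 0) := by
  have hsg : ∀ k, s k ⬝ᵥ g (k + 1) = 0 := fun k => by rw [hs, smul_dotProduct, hls, smul_zero]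
  -- The search direction is not orthogonal to a nonzero gradient.
  have hdg : ∀ k, g k ≠ 0 → d k ⬝ᵥ g k ≠ 0 := by
    intro k hk
    have hpos := dotProduct_mulVec_self_pos hP hk
    cases k with
    | zero =>
      rw [hd0, neg_dotProduct, dotProduct_comm]
      exact neg_ne_zero.mpr hpos.ne'
    | succ k =>
      rw [hd, neg_dotProduct, smul_dotProduct, sub_dotProduct, smul_dotProduct, hsg,
        dotProduct_comm (P *ᵥ g (k + 1))]
      simpa using ⟨hβ k, hpos.ne'⟩
  have hlam : ∀ k, g k ≠ 0 → lam k ≠ 0 := by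
    intro k hk h0
    have h := hls k
    rw [hgs, hy, hs, h0] at h
    simp only [zero_smul, mulVec_zero, add_zero] at h
    exact hdg k hk h
  have hsy : ∀ k, g k ≠ 0 → s k ⬝ᵥ y k ≠ 0 := by
    intro k hk
    rw [hy]
    refine (dotProduct_mulVec_self_pos hA ?_).ne'
    rw [hs]
    refine smul_ne_zero (hlam k hk) fun h => hdg k hk ?_
    rw [h, zero_dotProduct]
  intro k
  induction k using Nat.strong_induction_on with
  | _ k ih =>
  intro hkN
  refine ⟨hlam k (hne k hkN), ?_⟩
  cases k with
  | zero => simp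
  | succ k =>
    obtain ⟨-, ih1, ih2, ih3⟩ := ih k (by omega) (by omega)
    have c1 : ∀ j < k + 1, s j ⬝ᵥ g (k + 1) = 0 := by
      intro j hj
      rcases Nat.lt_succ_iff_lt_or_eq.mp hj with hj | rfl
      · rw [hgs, dotProduct_add, ih1 j hj, hy, dotProduct_mulVec_symm hA, ← hy, dotProduct_comm,
          ih3 j hj, add_zero]
      · exact hsg j
    have cd : ∀ j < k + 1, d j ⬝ᵥ g (k + 1) = 0 := by
      intro j hj
      have h := c1 j hj
      rw [hs, smul_dotProduct, smul_eq_mul] at h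
      exact (mul_eq_zero.mp h).resolve_left (hlam j (hne j (by omega)))
    -- `P g j` is a combination of `d j` and `s (j - 1)`.
    have c2 : ∀ j < k + 1, g j ⬝ᵥ (P *ᵥ g (k + 1)) = 0 := by
      intro j hj
      rw [dotProduct_mulVec_symm hP, dotProduct_comm]
      have h := cd j hj
      cases j with
      | zero =>
        rwa [hd0, neg_dotProduct, neg_eq_zero] at h
      | succ j =>
        rw [hd, neg_dotProduct, smul_dotProduct, sub_dotProduct, smul_dotProduct,
          c1 j (by omega)] at h
        simpa [hβ j] using h
    refine ⟨c1, c2, ?_⟩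
    intro j hj
    rw [hs, hd, dotProduct_smul, dotProduct_neg, dotProduct_smul, dotProduct_sub, dotProduct_smul]
    rcases Nat.lt_succ_iff_lt_or_eq.mp hj with hj | rfl
    · have h : y j = g (j + 1) - g j := by rw [hgs]; abel
      rw [ih3 j hj, h, sub_dotProduct, c2 (j + 1) (by omega), c2 j (by omega)]
      simp
    · have h := hsy j (hne j (by omega))
      rw [dotProduct_comm (y j) (s j), hrho]
      simp only [smul_eq_mul]
      field_simp
      simp

/-- More than `n` nonzero vectors in `ℝⁿ` cannot be pairwise `P`-orthogonal. -/
lemma exists_zero_of_orthogonal {n : ℕ} {P : Matrix (Fin n) (Fin n) ℝ} (hP : P.PosDef)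
    (g : ℕ → Fin n → ℝ) (h : ∀ k ≤ n, ∀ j < k, g j ⬝ᵥ (P *ᵥ g k) = 0) :
    ∃ k ≤ n, g k = 0 := by
  by_contra! hne
  have hli : LinearIndependent ℝ (fun i : Fin (n + 1) => g i) := by
    rw [Fintype.linearIndependent_iff]
    intro c hc i
    have h1 : (∑ j, c j • g j) ⬝ᵥ (P *ᵥ g i) = 0 := by rw [hc, zero_dotProduct]
    rw [sum_dotProduct, Finset.sum_eq_single i] at h1
    · rw [smul_dotProduct, smul_eq_mul] at h1
      exact (mul_eq_zero.mp h1).resolve_right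
        (dotProduct_mulVec_self_pos hP (hne i (by omega))).ne'
    · intro j _ hji
      have : g j ⬝ᵥ (P *ᵥ g i) = 0 := by
        rcases lt_or_gt_of_ne (Fin.val_ne_of_ne hji) with hlt | hlt
        · exact h i (by omega) j hlt
        · rw [dotProduct_mulVec_symm hP]
          exact h j (by omega) i hlt
      rw [smul_dotProduct, this, smul_zero]
    · simp
  have := hli.fintype_card_le_finrank
  simp at this

/-- the BFGS-type iteration with exact line search on a strictly
convex quadratic, with `H̃_k g_{k+1} = β_k H₀ g_{k+1}`, `β_k ≠ 0`, terminates in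
at most `n` steps: some gradient `g_k`, `k ≤ n`, vanishes. -/
theorem bfgs_type_quadratic_termination {n : ℕ}
    (A : Matrix (Fin n) (Fin n) ℝ) (hA : A.PosDef) (b : Fin n → ℝ)
    (x g d s y : ℕ → Fin n → ℝ) (lam rho : ℕ → ℝ)
    (H Htil : ℕ → Matrix (Fin n) (Fin n) ℝ)
    (hg : ∀ k, g k = A *ᵥ x k - b)
    (hH0 : (H 0).PosDef)
    (hHtil : ∀ k, (Htil k).PosDef)
    (hd : ∀ k, d k = -(H k *ᵥ g k))
    (hlam : ∀ k, ∀ t : ℝ, fQuad A b (x k + lam k • d k) ≤ fQuad A b (x k + t • d k))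
    (hx : ∀ k, x (k + 1) = x k + lam k • d k)
    (hs : ∀ k, s k = x (k + 1) - x k)
    (hy : ∀ k, y k = g (k + 1) - g k)
    (hrho : ∀ k, rho k = (s k ⬝ᵥ y k)⁻¹)
    (hH : ∀ k, H (k + 1) =
      (1 - rho k • Matrix.vecMulVec (s k) (y k)) * Htil k *
          (1 - rho k • Matrix.vecMulVec (y k) (s k))
        + rho k • Matrix.vecMulVec (s k) (s k))
    (hbeta : ∀ k, ∃ βk : ℝ, βk ≠ 0 ∧
      Htil k *ᵥ g (k + 1) = βk • (H 0 *ᵥ g (k + 1))) :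
    ∃ k ≤ n, g k = 0 := by
  by_contra! hne
  choose β hβ hHtg using hbeta
  have hs' : ∀ k, s k = lam k • d k := fun k => by rw [hs, hx, add_sub_cancel_left]
  have hy' : ∀ k, y k = A *ᵥ s k := fun k => by
    rw [hy, hg, hg, hs, mulVec_sub, sub_sub_sub_cancel_right]
  have hls : ∀ k, d k ⬝ᵥ g (k + 1) = 0 := by
    intro k
    rw [hg]
    refine exact_line_search hA b _ _ fun t => ?_
    rw [hx, add_assoc, ← add_smul]
    exact hlam k _
  have hdir : ∀ k, d (k + 1) = -(β k • (H 0 *ᵥ g (k + 1)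
      - (rho k * (y k ⬝ᵥ (H 0 *ᵥ g (k + 1)))) • s k)) := by
    intro k
    rw [hd, hH]
    refine congrArg Neg.neg (bfgs_direction _ _ _ _ _ _ _ ?_ (hHtg k))
    rw [hs', smul_dotProduct, hls, smul_zero]
  have key := bfgs_conjugacy hA hH0 g d s y lam rho β hs' hy'
    (fun k => by rw [hy, add_sub_cancel]) hrho hls hβ (hd 0) hdir n hne
  obtain ⟨k, hk, h0⟩ := exists_zero_of_orthogonal hH0 g fun k hk => (key k hk).2.2.1
  exact hne k hk h0
end
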